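/- arXiv:gr-qc/0006083 — 9 statements merged into one kernel-verified Lean document; each statement's English description precedes it below -/
import Mathlib

section
/- Let U : ℝ → ℝ be smooth and nonvanishing on an open interval I, let τ be an antiderivative of U on I, and let a, b, c be real constants. Define A₁(t) = U(t)⁻¹ e^{−a τ(t)}, A₂(t) = U(t)⁻¹ e^{−b τ(t)}, A₃(t) = U(t)⁻¹ e^{−c τ(t)}. Then on I × ℝ³ the vector field Y with components (Y⁰, Y¹, Y², Y³)(t,x,y,z) = (1/U(t), a·x, b·y, c·z) satisfies L_Y g = 2ψ g for the diagonal Bianchi I metric g built from A₁, A₂, A₃, where the conformal factor is ψ(t,x,y,z) = −U'(t)/U(t)². In other words, every Bianchi I metric of this family admits Y as a conformal Killing vector with conformal factor −U'/U². -/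
/-- Partial derivative `∂_a f` on ℝ⁴ (coordinates indexed by `Fin 4`). -/
noncomputable def pderiv4 (a : Fin 4) (f : (Fin 4 → ℝ) → ℝ) (p : Fin 4 → ℝ) : ℝ :=
  fderiv ℝ f p (Pi.single a 1)

/-- Lie derivative of a (0,2)-tensor field `T` along the vector field `X`:
`(L_X T)_{ab} = Σ_c X^c ∂_c T_{ab} + Σ_c T_{cb} ∂_a X^c + Σ_c T_{ac} ∂_b X^c`. -/
noncomputable def lieDerivT (X : (Fin 4 → ℝ) → Fin 4 → ℝ)
    (T : (Fin 4 → ℝ) → Matrix (Fin 4) (Fin 4) ℝ) (p : Fin 4 → ℝ) :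
    Matrix (Fin 4) (Fin 4) ℝ :=
  Matrix.of fun a b =>
    (∑ c, X p c * pderiv4 c (fun q => T q a b) p)
      + (∑ c, T p c b * pderiv4 a (fun q => X q c) p)
      + (∑ c, T p a c * pderiv4 b (fun q => X q c) p)

theorem pderiv4_time (i : Fin 4) (f : ℝ → ℝ) (f' : ℝ) (p : Fin 4 → ℝ)
    (h : HasDerivAt f f' (p 0)) :
    pderiv4 i (fun q => f (q 0)) p = f' * (Pi.single i 1 : Fin 4 → ℝ) 0 := by
  have h1 : HasFDerivAt (fun q : Fin 4 → ℝ => q 0)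
      (ContinuousLinearMap.proj (R := ℝ) (φ := fun _ : Fin 4 => ℝ) 0) p :=
    (ContinuousLinearMap.proj (R := ℝ) (φ := fun _ : Fin 4 => ℝ) 0).hasFDerivAt
  have h2 := h.comp_hasFDerivAt p h1
  unfold pderiv4
  have h3 := h2.fderiv
  simp only [Function.comp_def] at h3
  rw [h3]
  simp

theorem pderiv4_lin (i j : Fin 4) (k : ℝ) (p : Fin 4 → ℝ) :
    pderiv4 i (fun q => k * q j) p = k * (Pi.single i 1 : Fin 4 → ℝ) j := by
  have h1 : HasFDerivAt (fun q : Fin 4 → ℝ => q j)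
      (ContinuousLinearMap.proj (R := ℝ) (φ := fun _ : Fin 4 => ℝ) j) p :=
    (ContinuousLinearMap.proj (R := ℝ) (φ := fun _ : Fin 4 => ℝ) j).hasFDerivAt
  unfold pderiv4
  rw [(h1.const_mul k).fderiv]
  simp

theorem pderiv4_const (i : Fin 4) (k : ℝ) (p : Fin 4 → ℝ) :
    pderiv4 i (fun _ => k) p = 0 := by
  simp [pderiv4]

theorem hasDerivAt_scale (I : Set ℝ) (hI : IsOpen I) (U τ A : ℝ → ℝ) (k t : ℝ) (ht : t ∈ I)
    (hU : HasDerivAt U (deriv U t) t) (hne : U t ≠ 0) (hτ : HasDerivAt τ (U t) t)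
    (hA : ∀ t ∈ I, A t = (U t)⁻¹ * Real.exp (-(k * τ t))) :
    HasDerivAt (fun s => A s ^ 2) (A t ^ 2 * (-2 * deriv U t / U t - 2 * k * U t)) t := by
  have h := ((hU.inv hne).mul ((hτ.const_mul k).neg.exp)).pow 2
  have h' : HasDerivAt (fun s => A s ^ 2) _ t := h.congr_of_eventuallyEq (by
    filter_upwards [hI.mem_nhds ht] with s hs
    simp [hA s hs])
  convert h' using 1
  rw [hA t ht]
  simp
  field_simp
  ring

/-- Every Bianchi I metric of the family `A_μ = U⁻¹ e^{-k_μ τ}` (k₁,k₂,k₃ = a,b,c,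
`τ` an antiderivative of `U`) admits the conformal Killing vector
`Y = (1/U) ∂_t + a x ∂_x + b y ∂_y + c z ∂_z` with conformal factor `ψ = -U'/U²`. -/
theorem bianchiI_conformal_family_admits_CKV
    (I : Set ℝ) (hIopen : IsOpen I) (hIconn : I.OrdConnected)
    (U τ : ℝ → ℝ) (hU : ContDiffOn ℝ (⊤ : ℕ∞) U I) (hUne : ∀ t ∈ I, U t ≠ 0)
    (hτ : ∀ t ∈ I, HasDerivAt τ (U t) t)
    (a b c : ℝ)
    (A₁ A₂ A₃ : ℝ → ℝ)
    (hA₁ : ∀ t ∈ I, A₁ t = (U t)⁻¹ * Real.exp (-(a * τ t)))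
    (hA₂ : ∀ t ∈ I, A₂ t = (U t)⁻¹ * Real.exp (-(b * τ t)))
    (hA₃ : ∀ t ∈ I, A₃ t = (U t)⁻¹ * Real.exp (-(c * τ t)))
    (g : (Fin 4 → ℝ) → Matrix (Fin 4) (Fin 4) ℝ)
    (hg : ∀ p : Fin 4 → ℝ,
      g p = Matrix.diagonal ![(-1 : ℝ), (A₁ (p 0)) ^ 2, (A₂ (p 0)) ^ 2, (A₃ (p 0)) ^ 2])
    (Y : (Fin 4 → ℝ) → Fin 4 → ℝ)
    (hY : ∀ p : Fin 4 → ℝ, Y p = ![(U (p 0))⁻¹, a * p 1, b * p 2, c * p 3])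
    (ψ : ℝ → ℝ) (hψ : ∀ t ∈ I, ψ t = -(deriv U t) / (U t) ^ 2) :
    ∀ p : Fin 4 → ℝ, p 0 ∈ I → lieDerivT Y g p = (2 * ψ (p 0)) • g p := by
  intro p hp
  have hUd : HasDerivAt U (deriv U (p 0)) (p 0) :=
    ((hU.contDiffAt (hIopen.mem_nhds hp)).differentiableAt (by simp)).hasDerivAt
  have hne := hUne _ hp
  have hUi := fun i => pderiv4_time i (fun s => (U s)⁻¹) _ p (hUd.inv hne)
  have h1 := fun i => pderiv4_time i (fun s => A₁ s ^ 2) _ p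
    (hasDerivAt_scale I hIopen U τ A₁ a _ hp hUd hne (hτ _ hp) hA₁)
  have h2 := fun i => pderiv4_time i (fun s => A₂ s ^ 2) _ p
    (hasDerivAt_scale I hIopen U τ A₂ b _ hp hUd hne (hτ _ hp) hA₂)
  have h3 := fun i => pderiv4_time i (fun s => A₃ s ^ 2) _ p
    (hasDerivAt_scale I hIopen U τ A₃ c _ hp hUd hne (hτ _ hp) hA₃)
  obtain rfl : g = _ := funext hg
  obtain rfl : Y = _ := funext hY
  ext i j
  fin_cases i <;> fin_cases j <;>
    simp [lieDerivT, Fin.sum_univ_four, Matrix.diagonal_apply, hUi, h1, h2, h3, pderiv4_lin,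
      pderiv4_const, hψ _ hp, Pi.single_apply] <;>
    field_simp <;> ring
end

section
/- Let I ⊆ ℝ be an open interval, let R₁, R₂, R₃ : I → ℝ be nonvanishing functions of t only, and let X¹, X², X³ : I × ℝ³ → ℝ be smooth functions on the coordinates (t,x¹,x²,x³) satisfying R_μ(t)·∂_ν X^μ + R_ν(t)·∂_μ X^ν = 0 for all distinct μ, ν ∈ {1,2,3}. Then ∂_μ ∂_ρ X^ν = 0 for all pairwise distinct indices μ, ν, ρ ∈ {1,2,3}. -/
/-- Spatial coordinate index: `μ ∈ {1,2,3}` viewed inside `Fin 4`. -/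
def spIdx (μ : Fin 3) : Fin 4 := μ.succ

lemma aux_two : (2 : WithTop ℕ∞) ≤ ((⊤ : ℕ∞) : WithTop ℕ∞) := by
  have h : ((2 : ℕ∞) : WithTop ℕ∞) ≤ ((⊤ : ℕ∞) : WithTop ℕ∞) := WithTop.coe_le_coe.mpr le_top
  exact h

lemma aux_diff (I : Set ℝ) (hIopen : IsOpen I) (f : (Fin 4 → ℝ) → ℝ)
    (hf : ContDiffOn ℝ (⊤ : ℕ∞) f {p : Fin 4 → ℝ | p 0 ∈ I}) (p : Fin 4 → ℝ) (hp : p 0 ∈ I) :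
    ContDiffAt ℝ (⊤ : ℕ∞) f p := by
  have ho : IsOpen {p : Fin 4 → ℝ | p 0 ∈ I} := hIopen.preimage (continuous_apply 0)
  exact hf.contDiffAt (ho.mem_nhds hp)

lemma aux_fderiv (f : (Fin 4 → ℝ) → ℝ) (p : Fin 4 → ℝ)
    (hf : ContDiffAt ℝ (⊤ : ℕ∞) f p) : DifferentiableAt ℝ (fderiv ℝ f) p := by
  have h : ContDiffAt ℝ 1 (fderiv ℝ f) p :=
    hf.fderiv_right (m := 1) (by rw [one_add_one_eq_two]; exact aux_two)
  exact h.differentiableAt (by norm_num)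

lemma aux_apply (f : (Fin 4 → ℝ) → ℝ) (p : Fin 4 → ℝ) (a b : Fin 4)
    (hf : ContDiffAt ℝ (⊤ : ℕ∞) f p) :
    pderiv4 a (fun q => pderiv4 b f q) p
      = fderiv ℝ (fderiv ℝ f) p (Pi.single a 1) (Pi.single b 1) := by
  have h := aux_fderiv f p hf
  unfold pderiv4
  rw [fderiv_clm_apply h (differentiableAt_const _)]
  simp

lemma aux_symm (f : (Fin 4 → ℝ) → ℝ) (p : Fin 4 → ℝ) (a b : Fin 4)
    (hf : ContDiffAt ℝ (⊤ : ℕ∞) f p) :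
    pderiv4 a (fun q => pderiv4 b f q) p = pderiv4 b (fun q => pderiv4 a f q) p := by
  rw [aux_apply f p a b hf, aux_apply f p b a hf]
  have h : IsSymmSndFDerivAt ℝ f p := hf.isSymmSndFDerivAt (by
    simp only [minSmoothness_of_isRCLikeNormedField]; exact aux_two)
  exact h _ _

lemma aux_line (f : (Fin 4 → ℝ) → ℝ) (p : Fin 4 → ℝ) (a b : Fin 4)
    (hf : ContDiffAt ℝ (⊤ : ℕ∞) f p) :
    HasDerivAt (fun s : ℝ => pderiv4 b f (p + s • Pi.single a 1))
      (pderiv4 a (fun q => pderiv4 b f q) p) 0 := by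
  have h : DifferentiableAt ℝ (fun q => pderiv4 b f q) p :=
    (aux_fderiv f p hf).clm_apply (differentiableAt_const _)
  exact h.hasFDerivAt.hasLineDerivAt _

/-- If smooth functions `X¹,X²,X³` satisfy the off-diagonal spatial Ricci collineation
equations `R_μ ∂_ν X^μ + R_ν ∂_μ X^ν = 0` (μ ≠ ν) for nonvanishing functions `R_μ` of `t`
only, then the mixed spatial second derivatives vanish: `∂_μ ∂_ρ X^ν = 0` for pairwise
distinct `μ, ν, ρ`. -/
theorem ricci_collineation_mixed_second_derivatives_vanish
    (I : Set ℝ) (hIopen : IsOpen I) (hIconn : I.OrdConnected)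
    (R : Fin 3 → ℝ → ℝ) (hRne : ∀ (μ : Fin 3), ∀ t ∈ I, R μ t ≠ 0)
    (X : Fin 3 → (Fin 4 → ℝ) → ℝ)
    (hX : ∀ μ : Fin 3, ContDiffOn ℝ (⊤ : ℕ∞) (X μ) {p : Fin 4 → ℝ | p 0 ∈ I})
    (heq : ∀ μ ν : Fin 3, μ ≠ ν → ∀ p : Fin 4 → ℝ, p 0 ∈ I →
      R μ (p 0) * pderiv4 (spIdx ν) (X μ) p + R ν (p 0) * pderiv4 (spIdx μ) (X ν) p = 0) :
    ∀ μ ν ρ : Fin 3, μ ≠ ν → ν ≠ ρ → μ ≠ ρ →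
      ∀ p : Fin 4 → ℝ, p 0 ∈ I →
        pderiv4 (spIdx μ) (fun q => pderiv4 (spIdx ρ) (X ν) q) p = 0 := by
  have hc := fun μ p hp => aux_diff I hIopen (X μ) (hX μ) p hp
  have key : ∀ μ ν ρ : Fin 3, μ ≠ ν → ∀ p : Fin 4 → ℝ, p 0 ∈ I →
      R μ (p 0) * pderiv4 (spIdx ρ) (fun q => pderiv4 (spIdx ν) (X μ) q) p
      + R ν (p 0) * pderiv4 (spIdx ρ) (fun q => pderiv4 (spIdx μ) (X ν) q) p = 0 := by
    intro μ ν ρ hμν p hp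
    have h1 := (aux_line (X μ) p (spIdx ρ) (spIdx ν) (hc μ p hp)).const_mul (R μ (p 0))
    have h2 := (aux_line (X ν) p (spIdx ρ) (spIdx μ) (hc ν p hp)).const_mul (R ν (p 0))
    have h3 := h1.add h2
    refine h3.unique ((hasDerivAt_const (0 : ℝ) (0 : ℝ)).congr_of_eventuallyEq ?_)
    refine Filter.Eventually.of_forall fun s => ?_
    have h0 : (p + s • (Pi.single (spIdx ρ) 1 : Fin 4 → ℝ)) 0 = p 0 := by
      simp [spIdx, Pi.single_apply, (Fin.succ_ne_zero ρ).symm]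
    have := heq μ ν hμν (p + s • Pi.single (spIdx ρ) 1) (by rw [h0]; exact hp)
    rw [h0] at this
    simpa using this
  intro μ ν ρ hμν hνρ hμρ p hp
  have k1 := key μ ν ρ hμν p hp
  have k2 := key ν ρ μ hνρ p hp
  have k3 := key μ ρ ν hμρ p hp
  rw [aux_symm (X ν) p (spIdx ρ) (spIdx μ) (hc ν p hp)] at k1
  rw [aux_symm (X ρ) p (spIdx μ) (spIdx ν) (hc ρ p hp)] at k2
  rw [aux_symm (X μ) p (spIdx ν) (spIdx ρ) (hc μ p hp)] at k3
  have k : R ν (p 0) * pderiv4 (spIdx μ) (fun q => pderiv4 (spIdx ρ) (X ν) q) p = 0 := by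
    linarith
  exact (mul_eq_zero.mp k).resolve_left (hRne ν _ hp)
end

section
/- Let R : ℝ⁴ → Matrix (Fin 4) (Fin 4) ℝ be a diagonal symmetric tensor field whose entries depend only on the first coordinate t, and suppose its (1,1) diagonal entry vanishes identically, R₁₁ ≡ 0. Then for every smooth function f : ℝ⁴ → ℝ, the vector field X with components (0, f, 0, 0) satisfies L_X R = 0. In particular, a Bianchi I space-time whose Ricci tensor has R₁₁ = 0 (degenerate Ricci tensor of rank 3) admits infinitely many smooth Ricci collineations. -/
/-- If the (diagonal, `t`-dependent) Ricci tensor field `R` of a Bianchi I space-time has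
`R₁₁ ≡ 0` (degenerate Ricci tensor of rank 3), then for every smooth `f : ℝ⁴ → ℝ` the
vector field `X = (0, f, 0, 0)` is a Ricci collineation: `L_X R = 0`. Hence there are
infinitely many smooth Ricci collineations. -/
theorem degenerate_ricci_infinitely_many_RCs
    (R : (Fin 4 → ℝ) → Matrix (Fin 4) (Fin 4) ℝ)
    (hdiag : ∀ (p : Fin 4 → ℝ) (a b : Fin 4), a ≠ b → R p a b = 0)
    (hsymm : ∀ p : Fin 4 → ℝ, (R p).IsSymm)
    (hdep : ∀ p q : Fin 4 → ℝ, p 0 = q 0 → R p = R q)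
    (h11 : ∀ p : Fin 4 → ℝ, R p 1 1 = 0) :
    ∀ f : (Fin 4 → ℝ) → ℝ, ContDiff ℝ (⊤ : ℕ∞) f →
      ∀ p : Fin 4 → ℝ, lieDerivT (fun q => ![(0 : ℝ), f q, 0, 0]) R p = 0 := by
  intro f _ p
  have key : ∀ a b : Fin 4, pderiv4 1 (fun q => R q a b) p = 0 := by
    intro a b
    unfold pderiv4
    by_cases hd : DifferentiableAt ℝ (fun q => R q a b) p
    · rw [← hd.lineDeriv_eq_fderiv]
      unfold lineDeriv
      have hc : (fun t : ℝ => R (p + t • (Pi.single 1 1 : Fin 4 → ℝ)) a b)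
          = fun _ => R p a b := by
        funext t
        rw [hdep (p + t • (Pi.single 1 1 : Fin 4 → ℝ)) p (by simp)]
      rw [hc]
      simp
    · rw [fderiv_zero_of_not_differentiableAt hd]
      simp
  have hz : ∀ a : Fin 4, pderiv4 a (fun _ => (0 : ℝ)) p = 0 := by
    intro a
    simp [pderiv4]
  have hrow : ∀ b : Fin 4, R p 1 b = 0 := by
    intro b
    by_cases h : (1 : Fin 4) = b
    · rw [← h]; exact h11 p
    · exact hdiag p 1 b h
  have hcol : ∀ a : Fin 4, R p a 1 = 0 := by
    intro a
    by_cases h : a = (1 : Fin 4)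
    · rw [h]; exact h11 p
    · exact hdiag p a 1 h
  ext a b
  simp [lieDerivT, Fin.sum_univ_four, key, hz, hrow, hcol]
end

section
/- Let I ⊆ ℝ be an open interval, R₀ : I → ℝ smooth and positive, F an antiderivative of √R₀ on I, and let C₁,C₂,C₃ be nonzero constants and c₁,c₂,c₃ constants. Define R_μ(t) = C_μ e^{2 c_μ F(t)} for μ = 1,2,3, and the diagonal tensor field R(t,x,y,z) = diag(R₀(t), R₁(t), R₂(t), R₃(t)). Then the vector field X with components (X⁰,X¹,X²,X³)(t,x,y,z) = (1/√R₀(t), −c₁·x, −c₂·y, −c₃·z) satisfies L_X R = 0, i.e., X is a Ricci collineation of every Bianchi I space-time whose Ricci tensor has this form. -/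
theorem pderiv4_comp (a i : Fin 4) (g : ℝ → ℝ) (g' : ℝ) (p : Fin 4 → ℝ)
    (h : HasDerivAt g g' (p i)) :
    pderiv4 a (fun q => g (q i)) p = if i = a then g' else 0 := by
  have h1 : HasFDerivAt (fun q : Fin 4 → ℝ => q i)
      (ContinuousLinearMap.proj (R := ℝ) (φ := fun _ : Fin 4 => ℝ) i) p :=
    (ContinuousLinearMap.proj (R := ℝ) (φ := fun _ : Fin 4 => ℝ) i).hasFDerivAt
  have h2 : HasFDerivAt (fun q : Fin 4 → ℝ => g (q i)) _ p := h.comp_hasFDerivAt p h1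
  unfold pderiv4
  rw [h2.fderiv]
  simp [Pi.single_apply]

theorem pderiv4_zero (a : Fin 4) (p : Fin 4 → ℝ) :
    pderiv4 a (fun _ => (0:ℝ)) p = 0 := by
  simp [pderiv4]

/-- For a diagonal Ricci tensor `R = diag(R₀, C₁ e^{2c₁F}, C₂ e^{2c₂F}, C₃ e^{2c₃F})`
(`F` an antiderivative of `√R₀`), the vector field
`X = (1/√R₀, -c₁ x, -c₂ y, -c₃ z)` is a Ricci collineation: `L_X R = 0`. -/
theorem bianchiI_caseA_ricci_collineation
    (I : Set ℝ) (hIopen : IsOpen I) (hIconn : I.OrdConnected)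
    (R₀ : ℝ → ℝ) (hR : ContDiffOn ℝ (⊤ : ℕ∞) R₀ I) (hRpos : ∀ t ∈ I, 0 < R₀ t)
    (F : ℝ → ℝ) (hF : ∀ t ∈ I, HasDerivAt F (Real.sqrt (R₀ t)) t)
    (C c : Fin 3 → ℝ) (hC : ∀ μ : Fin 3, C μ ≠ 0)
    (Ric : (Fin 4 → ℝ) → Matrix (Fin 4) (Fin 4) ℝ)
    (hRic : ∀ p : Fin 4 → ℝ,
      Ric p = Matrix.diagonal
        (Fin.cons (R₀ (p 0)) (fun μ : Fin 3 => C μ * Real.exp (2 * c μ * F (p 0)))))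
    (X : (Fin 4 → ℝ) → Fin 4 → ℝ)
    (hX : ∀ p : Fin 4 → ℝ,
      X p = ![1 / Real.sqrt (R₀ (p 0)), -(c 0) * p 1, -(c 1) * p 2, -(c 2) * p 3]) :
    ∀ p : Fin 4 → ℝ, p 0 ∈ I → lieDerivT X Ric p = 0 := by
  intro p hp
  have hpos := hRpos _ hp
  have hs : Real.sqrt (R₀ (p 0)) ≠ 0 := (Real.sqrt_pos.mpr hpos).ne'
  have hsq : Real.sqrt (R₀ (p 0)) ^ 2 = R₀ (p 0) := Real.sq_sqrt hpos.le
  obtain ⟨r, hr⟩ : ∃ r, HasDerivAt R₀ r (p 0) :=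
    ⟨_, (((hR.contDiffAt (hIopen.mem_nhds hp)).differentiableAt (by simp)).hasDerivAt)⟩
  have hE : ∀ μ (a : Fin 4), pderiv4 a (fun q => C μ * Real.exp (2 * c μ * F (q 0))) p
      = if (0 : Fin 4) = a then
        C μ * (Real.exp (2 * c μ * F (p 0)) * (2 * c μ * Real.sqrt (R₀ (p 0)))) else 0 :=
    fun μ a => pderiv4_comp a 0 (fun t => C μ * Real.exp (2 * c μ * F t)) _ p
      ((((hF _ hp).const_mul (2 * c μ)).exp).const_mul (C μ))
  have hR0 : ∀ a : Fin 4, pderiv4 a (fun q => R₀ (q 0)) p = if (0 : Fin 4) = a then r else 0 :=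
    fun a => pderiv4_comp a 0 R₀ r p hr
  have hX0 : ∀ a : Fin 4, pderiv4 a (fun q => (Real.sqrt (R₀ (q 0)))⁻¹) p
      = if (0 : Fin 4) = a then
        -(r / (2 * Real.sqrt (R₀ (p 0)))) / Real.sqrt (R₀ (p 0)) ^ 2 else 0 :=
    fun a => pderiv4_comp a 0 (fun t => (Real.sqrt (R₀ t))⁻¹) _ p
      ((hr.sqrt hpos.ne').fun_inv hs)
  have hXi : ∀ (k : ℝ) (i a : Fin 4), pderiv4 a (fun q => -(k * q i)) p
      = if i = a then -(k * 1) else 0 :=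
    fun k i a => pderiv4_comp a i (fun t => -(k * t)) _ p
      (((hasDerivAt_id' (p i)).const_mul k).fun_neg)
  have d0 : ∀ q, Ric q 0 0 = R₀ (q 0) := fun q => by rw [hRic]; simp
  have d1 : ∀ q, Ric q 1 1 = C 0 * Real.exp (2 * c 0 * F (q 0)) := fun q => by
    rw [hRic, Matrix.diagonal_apply_eq]; rfl
  have d2 : ∀ q, Ric q 2 2 = C 1 * Real.exp (2 * c 1 * F (q 0)) := fun q => by
    rw [hRic, Matrix.diagonal_apply_eq]; rfl
  have d3 : ∀ q, Ric q 3 3 = C 2 * Real.exp (2 * c 2 * F (q 0)) := fun q => by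
    rw [hRic, Matrix.diagonal_apply_eq]; rfl
  have dn : ∀ q a b, a ≠ b → Ric q a b = 0 := fun q a b h => by
    rw [hRic, Matrix.diagonal_apply_ne _ h]
  have x0 : ∀ q, X q 0 = (Real.sqrt (R₀ (q 0)))⁻¹ := fun q => by rw [hX]; simp
  have x1 : ∀ q, X q 1 = -(c 0 * q 1) := fun q => by rw [hX]; simp
  have x2 : ∀ q, X q 2 = -(c 1 * q 2) := fun q => by rw [hX]; simp
  have x3 : ∀ q, X q 3 = -(c 2 * q 3) := fun q => by rw [hX]; simp
  ext a b
  fin_cases a <;> fin_cases b <;>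
    simp [lieDerivT, Fin.sum_univ_four, d0, d1, d2, d3, dn, x0, x1, x2, x3, hE, hR0, hX0, hXi,
      pderiv4_zero]
  · rw [hsq]
    field_simp
    ring
  all_goals
    field_simp
    ring
end

section
/- Let I ⊆ ℝ be an open interval, R₀ : I → ℝ smooth and positive, F an antiderivative of √R₀ on I, let R₁, R₂, R₃ be nonzero constants, let b^μ_ν (μ ≠ ν ∈ {1,2,3}) be constants satisfying R_μ·b^μ_ν + R_ν·b^ν_μ = 0 for all μ ≠ ν, and let D₁, D₂, D₃, d be constants. Define the vector field X by X⁰(t,x¹,x²,x³) = (D₁x¹ + D₂x² + D₃x³ + d)/√R₀(t) and X^μ(t,x¹,x²,x³) = Σ_{ν≠μ} b^μ_ν x^ν − (D_μ/R_μ)·F(t) for μ = 1,2,3. Then X satisfies L_X R = 0, where R = diag(R₀(t), R₁, R₂, R₃). Hence a Bianchi I space-time with time-independent spatial Ricci components admits this seven-parameter family of Ricci collineations. -/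
/-- Case D: for a Ricci tensor `R = diag(R₀(t), R₁, R₂, R₃)` with constant nonzero spatial
components, the seven-parameter family of vector fields
`X⁰ = (D₁x¹ + D₂x² + D₃x³ + d)/√R₀`, `X^μ = Σ_{ν≠μ} b^μ_ν x^ν - (D_μ/R_μ) F(t)`
(with `F' = √R₀` and `R_μ b^μ_ν + R_ν b^ν_μ = 0` for `μ ≠ ν`) consists of Ricci
collineations: `L_X R = 0`. -/
theorem bianchiI_caseD_ricci_collineations
    (I : Set ℝ) (hIopen : IsOpen I) (hIconn : I.OrdConnected)
    (R₀ : ℝ → ℝ) (hR : ContDiffOn ℝ (⊤ : ℕ∞) R₀ I) (hRpos : ∀ t ∈ I, 0 < R₀ t)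
    (F : ℝ → ℝ) (hF : ∀ t ∈ I, HasDerivAt F (Real.sqrt (R₀ t)) t)
    (Rs : Fin 3 → ℝ) (hRs : ∀ μ : Fin 3, Rs μ ≠ 0)
    (b : Fin 3 → Fin 3 → ℝ)
    (hb : ∀ μ ν : Fin 3, μ ≠ ν → Rs μ * b μ ν + Rs ν * b ν μ = 0)
    (D : Fin 3 → ℝ) (d : ℝ)
    (Ric : (Fin 4 → ℝ) → Matrix (Fin 4) (Fin 4) ℝ)
    (hRic : ∀ p : Fin 4 → ℝ, Ric p = Matrix.diagonal (Fin.cons (R₀ (p 0)) Rs))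
    (X : (Fin 4 → ℝ) → Fin 4 → ℝ)
    (hX0 : ∀ p : Fin 4 → ℝ,
      X p 0 = (D 0 * p 1 + D 1 * p 2 + D 2 * p 3 + d) / Real.sqrt (R₀ (p 0)))
    (hXsp : ∀ (p : Fin 4 → ℝ) (μ : Fin 3),
      X p μ.succ = (∑ ν ∈ Finset.univ.filter (fun ν : Fin 3 => ν ≠ μ), b μ ν * p ν.succ)
        - (D μ / Rs μ) * F (p 0)) :
    ∀ p : Fin 4 → ℝ, p 0 ∈ I → lieDerivT X Ric p = 0 := by
  intro p hp
  have hpos := hRpos _ hp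
  have hs : 0 < Real.sqrt (R₀ (p 0)) := Real.sqrt_pos.2 hpos
  have hsq : Real.sqrt (R₀ (p 0)) ^ 2 = R₀ (p 0) := Real.sq_sqrt hpos.le
  have hRd : HasDerivAt R₀ (deriv R₀ (p 0)) (p 0) :=
    ((hR.contDiffAt (hIopen.mem_nhds hp)).differentiableAt (by simp)).hasDerivAt
  have hpr : ∀ i : Fin 4, HasFDerivAt (fun q : Fin 4 → ℝ => q i)
      (ContinuousLinearMap.proj (R := ℝ) (φ := fun _ : Fin 4 => ℝ) i) p :=
    fun i => hasFDerivAt_apply i p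
  have hR4 := hRd.comp_hasFDerivAt p (hpr 0)
  have hF4 := (hF _ hp).comp_hasFDerivAt p (hpr 0)
  have hI4 := ((hRd.sqrt hpos.ne').inv hs.ne').comp_hasFDerivAt p (hpr 0)
  have hL := ((((hpr 1).const_mul (D 0)).add ((hpr 2).const_mul (D 1))).add
    ((hpr 3).const_mul (D 2))).add_const d
  have h0 := hL.mul hI4
  have e0 : (fun q => X q 0) = fun q : Fin 4 → ℝ =>
      (D 0 * q 1 + D 1 * q 2 + D 2 * q 3 + d) * (Real.sqrt (R₀ (q 0)))⁻¹ := by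
    funext q; rw [hX0, div_eq_mul_inv]
  have f1 : (Finset.univ.filter (fun ν : Fin 3 => ν ≠ 0)) = {1, 2} := by decide
  have f2 : (Finset.univ.filter (fun ν : Fin 3 => ν ≠ 1)) = {0, 2} := by decide
  have f3 : (Finset.univ.filter (fun ν : Fin 3 => ν ≠ 2)) = {0, 1} := by decide
  have e1 : (fun q => X q 1) = fun q : Fin 4 → ℝ =>
      b 0 1 * q 2 + b 0 2 * q 3 - (D 0 / Rs 0) * F (q 0) := by
    funext q
    have := hXsp q 0
    rw [f1, Finset.sum_pair (by decide)] at this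
    exact this
  have e2 : (fun q => X q 2) = fun q : Fin 4 → ℝ =>
      b 1 0 * q 1 + b 1 2 * q 3 - (D 1 / Rs 1) * F (q 0) := by
    funext q
    have := hXsp q 1
    rw [f2, Finset.sum_pair (by decide)] at this
    exact this
  have e3 : (fun q => X q 3) = fun q : Fin 4 → ℝ =>
      b 2 0 * q 1 + b 2 1 * q 2 - (D 2 / Rs 2) * F (q 0) := by
    funext q
    have := hXsp q 2
    rw [f3, Finset.sum_pair (by decide)] at this
    exact this
  have h1 := (((hpr 2).const_mul (b 0 1)).add ((hpr 3).const_mul (b 0 2))).sub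
    (hF4.const_mul (D 0 / Rs 0))
  have h2 := (((hpr 1).const_mul (b 1 0)).add ((hpr 3).const_mul (b 1 2))).sub
    (hF4.const_mul (D 1 / Rs 1))
  have h3 := (((hpr 1).const_mul (b 2 0)).add ((hpr 2).const_mul (b 2 1))).sub
    (hF4.const_mul (D 2 / Rs 2))
  have g0 := fun a : Fin 4 => congrArg (fun L => L (Pi.single a (1 : ℝ))) h0.fderiv
  have g1 := fun a : Fin 4 => congrArg (fun L => L (Pi.single a (1 : ℝ))) h1.fderiv
  have g2 := fun a : Fin 4 => congrArg (fun L => L (Pi.single a (1 : ℝ))) h2.fderiv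
  have g3 := fun a : Fin 4 => congrArg (fun L => L (Pi.single a (1 : ℝ))) h3.fderiv
  have gR := fun a : Fin 4 => congrArg (fun L => L (Pi.single a (1 : ℝ))) hR4.fderiv
  have k0 := fun a : Fin 4 => (congrArg (fun f => pderiv4 a f p) e0).trans (g0 a)
  have k1 := fun a : Fin 4 => (congrArg (fun f => pderiv4 a f p) e1).trans (g1 a)
  have k2 := fun a : Fin 4 => (congrArg (fun f => pderiv4 a f p) e2).trans (g2 a)
  have k3 := fun a : Fin 4 => (congrArg (fun f => pderiv4 a f p) e3).trans (g3 a)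
  have kR : ∀ a, pderiv4 a (fun q => R₀ (q 0)) p = _ := fun a => gR a
  have kc : ∀ a c, pderiv4 a (fun _ => c) p = 0 := fun a c => by simp [pderiv4]
  have b01 := hb 0 1 (by decide)
  have b02 := hb 0 2 (by decide)
  have b12 := hb 1 2 (by decide)
  have r0 := hRs 0
  have r1 := hRs 1
  have r2 := hRs 2
  have c1 : ∀ x : ℝ, (Fin.cons x Rs : Fin 4 → ℝ) 1 = Rs 0 := fun x => rfl
  have c2 : ∀ x : ℝ, (Fin.cons x Rs : Fin 4 → ℝ) 2 = Rs 1 := fun x => rfl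
  have c3 : ∀ x : ℝ, (Fin.cons x Rs : Fin 4 → ℝ) 3 = Rs 2 := fun x => rfl
  ext i j
  simp only [lieDerivT, hRic, Matrix.of_apply, Fin.sum_univ_four, k0, k1, k2, k3, hX0 p]
  clear k0 k1 k2 k3 g0 g1 g2 g3 gR h0 h1 h2 h3 e0 e1 e2 e3 hXsp hX0 hb
  generalize hS : Real.sqrt (R₀ (p 0)) = S at *
  fin_cases i <;> fin_cases j <;>
    simp [Matrix.diagonal_apply, kc, kR, c1, c2, c3, Pi.single_apply, hS] <;>
    (try rw [← hsq]) <;> (try field_simp) <;> (try ring_nf) <;> (try linarith)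
end

section
/- Let I ⊆ ℝ be an open interval, R₀ : I → ℝ smooth and positive, F an antiderivative of √R₀ on I, and let a > 0 and C₃ ≠ 0 be constants. Define R₃(t) = C₃² cosh²(√a · F(t)/C₃). Then R₃ satisfies the separation equation (R₃(t)/√R₀(t)) · d/dt[ (d/dt ln R₃(t)) / (2√R₀(t)) ] = a everywhere on I. -/
/-- The Case Ca₁ spatial Ricci component `R₃(t) = C₃² cosh²(√a F(t)/C₃)` (with `F' = √R₀`,
`R₀ > 0`, `a > 0`, `C₃ ≠ 0`) satisfies the separated Ricci-collineation integrability
condition `(R₃/√R₀) · d/dt[(d/dt ln R₃)/(2√R₀)] = a` on `I`. -/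
theorem caseCa1_separation_equation
    (I : Set ℝ) (hIopen : IsOpen I) (hIconn : I.OrdConnected)
    (R₀ : ℝ → ℝ) (hR : ContDiffOn ℝ (⊤ : ℕ∞) R₀ I) (hRpos : ∀ t ∈ I, 0 < R₀ t)
    (F : ℝ → ℝ) (hF : ∀ t ∈ I, HasDerivAt F (Real.sqrt (R₀ t)) t)
    (a C₃ : ℝ) (ha : 0 < a) (hC₃ : C₃ ≠ 0)
    (R₃ : ℝ → ℝ)
    (hR₃ : ∀ t, R₃ t = C₃ ^ 2 * (Real.cosh (Real.sqrt a * F t / C₃)) ^ 2) :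
    ∀ t ∈ I,
      (R₃ t / Real.sqrt (R₀ t)) *
        deriv (fun s => deriv (fun u => Real.log (R₃ u)) s / (2 * Real.sqrt (R₀ s))) t
        = a := by
  have hth : ∀ s ∈ I, HasDerivAt (fun u => Real.sqrt a * F u / C₃)
      (Real.sqrt a * Real.sqrt (R₀ s) / C₃) s := fun s hs =>
    ((hF s hs).const_mul (Real.sqrt a)).div_const C₃
  have h1 : ∀ s ∈ I, deriv (fun u => Real.log (R₃ u)) s / (2 * Real.sqrt (R₀ s))
      = Real.sqrt a / C₃ * (Real.sinh (Real.sqrt a * F s / C₃) /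
          Real.cosh (Real.sqrt a * F s / C₃)) := by
    intro s hs
    have hfun : (fun u => Real.log (R₃ u)) =
        fun u => Real.log (C₃ ^ 2 * (Real.cosh (Real.sqrt a * F u / C₃)) ^ 2) := by
      funext u
      rw [hR₃]
    have hc : Real.cosh (Real.sqrt a * F s / C₃) ≠ 0 := (Real.cosh_pos _).ne'
    have hr : Real.sqrt (R₀ s) ≠ 0 := (Real.sqrt_pos.2 (hRpos s hs)).ne'
    have hd := ((((hth s hs).cosh).pow 2).const_mul (C₃ ^ 2)).log
      (mul_ne_zero (pow_ne_zero 2 hC₃) (pow_ne_zero 2 hc))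
    have hd' := hd.deriv
    simp only [Pi.pow_apply] at hd'
    rw [hfun, hd']
    generalize Real.cosh (Real.sqrt a * F s / C₃) = c at *
    generalize Real.sinh (Real.sqrt a * F s / C₃) = d at *
    generalize Real.sqrt (R₀ s) = r at *
    field_simp
    try norm_num
    try ring
  intro t ht
  have he : (fun s => deriv (fun u => Real.log (R₃ u)) s / (2 * Real.sqrt (R₀ s))) =ᶠ[nhds t]
      (fun s => Real.sqrt a / C₃ * (Real.sinh (Real.sqrt a * F s / C₃) /
          Real.cosh (Real.sqrt a * F s / C₃))) := by
    filter_upwards [hIopen.mem_nhds ht] with s hs using h1 s hs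
  have hc : Real.cosh (Real.sqrt a * F t / C₃) ≠ 0 := (Real.cosh_pos _).ne'
  have hr : Real.sqrt (R₀ t) ≠ 0 := (Real.sqrt_pos.2 (hRpos t ht)).ne'
  have hd := (((hth t ht).sinh.div (hth t ht).cosh hc).const_mul (Real.sqrt a / C₃)).deriv
  simp only [Pi.div_apply] at hd
  rw [he.deriv_eq, hd, hR₃]
  have hid := Real.cosh_sq (Real.sqrt a * F t / C₃)
  have hsa : Real.sqrt a ^ 2 = a := Real.sq_sqrt ha.le
  generalize Real.cosh (Real.sqrt a * F t / C₃) = c at *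
  generalize Real.sinh (Real.sqrt a * F t / C₃) = d at *
  generalize Real.sqrt (R₀ t) = r at *
  field_simp
  rw [hsa, hid]
  ring
end

section
/- Let A₁, A₂, A₃ be arbitrary smooth positive functions of t and δ any real constant. Set u = (−1,0,0,0) and h(t,x,y,z) = diag(0, A₁(t)², A₂(t)², A₃(t)²). Then the vector field Z with components (0, δ·x, δ·y, δ·z) satisfies L_Z u = 0 and L_Z h = 2δ h. Hence every diagonal Bianchi I space-time with comoving fluid admits a kinematic self-similarity of the zeroth kind. -/
/-- Lie derivative of a covector field `u` along the vector field `X`: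
`(L_X u)_a = Σ_c X^c ∂_c u_a + Σ_c u_c ∂_a X^c`. -/
noncomputable def lieDerivCov (X : (Fin 4 → ℝ) → Fin 4 → ℝ)
    (u : (Fin 4 → ℝ) → Fin 4 → ℝ) (p : Fin 4 → ℝ) : Fin 4 → ℝ :=
  fun a =>
    (∑ c, X p c * pderiv4 c (fun q => u q a) p)
      + (∑ c, u p c * pderiv4 a (fun q => X q c) p)

theorem pderiv4_const_aux (a : Fin 4) (k : ℝ) (p : Fin 4 → ℝ) :
    pderiv4 a (fun _ => k) p = 0 := by
  simp [pderiv4]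

theorem pderiv4_coord_aux (a i : Fin 4) (k : ℝ) (p : Fin 4 → ℝ) :
    pderiv4 a (fun q => k * q i) p = k * (Pi.single a (1 : ℝ) : Fin 4 → ℝ) i := by
  have h1 : HasFDerivAt (fun q : Fin 4 → ℝ => k * q i)
      (k • (ContinuousLinearMap.proj i : (Fin 4 → ℝ) →L[ℝ] ℝ)) p :=
    (hasFDerivAt_apply i p).const_mul k
  rw [pderiv4, h1.fderiv]
  simp

theorem pderiv4_time_aux (a : Fin 4) (ha : a ≠ 0) (g : ℝ → ℝ) (hg : ContDiff ℝ (⊤ : ℕ∞) g)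
    (p : Fin 4 → ℝ) : pderiv4 a (fun q => g (q 0) ^ 2) p = 0 := by
  have hd : DifferentiableAt ℝ (fun t => g t ^ 2) (p 0) :=
    ((hg.differentiable (by simp)) (p 0)).pow 2
  have h1 : HasFDerivAt (fun q : Fin 4 → ℝ => g (q 0) ^ 2) _ p :=
    HasDerivAt.comp_hasFDerivAt (h₂ := fun t => g t ^ 2) p hd.hasDerivAt
      (hasFDerivAt_apply (𝕜 := ℝ) (0 : Fin 4) p)
  rw [pderiv4, h1.fderiv]
  simp [Pi.single_apply, ha.symm]

/-- Every diagonal Bianchi I space-time with comoving fluid admits the zeroth-kind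
kinematic self-similarity `Z = δ(x∂_x + y∂_y + z∂_z)`: `L_Z u = 0` and `L_Z h = 2δ h`,
where `u = (-1,0,0,0)` and `h = diag(0, A₁², A₂², A₃²)` for arbitrary smooth positive
metric functions `A₁, A₂, A₃` of `t`. -/
theorem bianchiI_zeroth_kind_KSS
    (δ : ℝ)
    (A : Fin 3 → ℝ → ℝ) (hA : ∀ μ : Fin 3, ContDiff ℝ (⊤ : ℕ∞) (A μ))
    (hApos : ∀ (μ : Fin 3) (t : ℝ), 0 < A μ t)
    (u : (Fin 4 → ℝ) → Fin 4 → ℝ) (hu : ∀ p : Fin 4 → ℝ, u p = ![(-1 : ℝ), 0, 0, 0])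
    (h : (Fin 4 → ℝ) → Matrix (Fin 4) (Fin 4) ℝ)
    (hh : ∀ p : Fin 4 → ℝ,
      h p = Matrix.diagonal ![(0 : ℝ), (A 0 (p 0)) ^ 2, (A 1 (p 0)) ^ 2, (A 2 (p 0)) ^ 2])
    (Z : (Fin 4 → ℝ) → Fin 4 → ℝ)
    (hZ : ∀ p : Fin 4 → ℝ, Z p = ![(0 : ℝ), δ * p 1, δ * p 2, δ * p 3]) :
    ∀ p : Fin 4 → ℝ, lieDerivCov Z u p = 0 ∧ lieDerivT Z h p = (2 * δ) • h p := by
  intro p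
  have t1 := fun μ => pderiv4_time_aux 1 (by decide) (A μ) (hA μ) p
  have t2 := fun μ => pderiv4_time_aux 2 (by decide) (A μ) (hA μ) p
  have t3 := fun μ => pderiv4_time_aux 3 (by decide) (A μ) (hA μ) p
  constructor
  · ext a
    fin_cases a <;>
      simp [lieDerivCov, Fin.sum_univ_four, hu, hZ, pderiv4_const_aux]
  · ext a b
    fin_cases a <;> fin_cases b <;>
      simp [lieDerivT, Fin.sum_univ_four, hh, hZ, pderiv4_const_aux, pderiv4_coord_aux,
        t1, t2, t3, Matrix.diagonal_apply, Pi.single_apply] <;> ring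
end

section
/- Let β ≠ 0 and δ, a₁, a₂, a₃ be constants, and define A_μ(t) = e^{(δ−a_μ)t/β} for μ = 1,2,3 and the diagonal Bianchi I metric g(t,x,y,z) = diag(−1, A₁(t)², A₂(t)², A₃(t)²). Then the vector field Y with components (Y⁰,Y¹,Y²,Y³)(t,x,y,z) = (1, ((a₁−δ)/β)·x, ((a₂−δ)/β)·y, ((a₃−δ)/β)·z) satisfies L_Y g = 0, i.e., Y is a Killing vector and the space-time becomes homogeneous. -/
theorem pd_const (c : Fin 4) (k : ℝ) (p : Fin 4 → ℝ) : pderiv4 c (fun _ => k) p = 0 := by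
  simp [pderiv4]

theorem pd_lin (c i : Fin 4) (k : ℝ) (p : Fin 4 → ℝ) :
    pderiv4 c (fun q => k * q i) p = k * (Pi.single c (1 : ℝ) : Fin 4 → ℝ) i := by
  have h : HasFDerivAt (fun q : Fin 4 → ℝ => k * q i)
      (k • (ContinuousLinearMap.proj i : (Fin 4 → ℝ) →L[ℝ] ℝ)) p :=
    (hasFDerivAt_apply i p).const_mul k
  simp [pderiv4, h.fderiv]

theorem pd_exp (c : Fin 4) (k β : ℝ) (p : Fin 4 → ℝ) :
    pderiv4 c (fun q => Real.exp (k * q 0 / β) ^ 2) p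
      = 2 * (k / β) * Real.exp (k * p 0 / β) ^ 2 * (Pi.single c (1 : ℝ) : Fin 4 → ℝ) 0 := by
  have h1 : HasDerivAt (fun t : ℝ => Real.exp (k * t / β) ^ 2)
      (2 * (k / β) * Real.exp (k * p 0 / β) ^ 2) (p 0) := by
    have := ((((hasDerivAt_id (p 0)).const_mul k).div_const β).exp).pow 2
    refine this.congr_deriv ?_
    simp
    ring
  have h := h1.comp_hasFDerivAt p (hasFDerivAt_apply (𝕜 := ℝ) (0 : Fin 4) p)
  have h2 : fderiv ℝ (fun q : Fin 4 → ℝ => Real.exp (k * q 0 / β) ^ 2) p = _ := h.fderiv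
  simp [pderiv4, h2]

/-- The Bianchi I metric with exponential metric functions `A_μ(t) = e^{(δ-a_μ)t/β}`
admits the Killing vector
`Y = ∂_t + ((a₁-δ)/β) x ∂_x + ((a₂-δ)/β) y ∂_y + ((a₃-δ)/β) z ∂_z`: `L_Y g = 0`,
so the space-time becomes homogeneous. -/
theorem exponential_bianchiI_extra_killing_vector
    (β δ : ℝ) (hβ : β ≠ 0) (a : Fin 3 → ℝ)
    (A : Fin 3 → ℝ → ℝ)
    (hA : ∀ (μ : Fin 3) (t : ℝ), A μ t = Real.exp ((δ - a μ) * t / β))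
    (g : (Fin 4 → ℝ) → Matrix (Fin 4) (Fin 4) ℝ)
    (hg : ∀ p : Fin 4 → ℝ,
      g p = Matrix.diagonal
        ![(-1 : ℝ), (A 0 (p 0)) ^ 2, (A 1 (p 0)) ^ 2, (A 2 (p 0)) ^ 2])
    (Y : (Fin 4 → ℝ) → Fin 4 → ℝ)
    (hY : ∀ p : Fin 4 → ℝ,
      Y p = ![(1 : ℝ), (a 0 - δ) / β * p 1, (a 1 - δ) / β * p 2, (a 2 - δ) / β * p 3]) :
    ∀ p : Fin 4 → ℝ, lieDerivT Y g p = 0 := by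
  intro p
  have eg : g = _ := funext hg
  have eY : Y = _ := funext hY
  subst eg
  subst eY
  ext i j
  fin_cases i <;> fin_cases j <;>
    simp [lieDerivT, Fin.sum_univ_four, Matrix.diagonal, hA, pd_const, pd_lin, pd_exp] <;> ring
end

section
/- Let a, δ, α, β be constants with α ≠ 0, let I be an open interval on which α t + β > 0, and let A : I → ℝ be smooth and positive satisfying a + (α t + β)·A'(t)/A(t) = δ on I. Then there exists a constant C > 0 such that A(t) = C·(α t + β)^{(δ−a)/α} for all t ∈ I. Consequently, the only Bianchi I space-times with comoving fluid which admit a kinematic self-similarity of the second kind are the Kasner-type space-times, whose metric functions are powers of (α t + β). -/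
/-- Solution of the second-kind (α ≠ 0) kinematic self-similarity condition
`a + (αt + β) A'/A = δ` on an interval where `αt + β > 0`: the metric function is the
power law `A(t) = C (αt + β)^{(δ-a)/α}`, i.e. the space-time is of Kasner type. -/
theorem KSS_second_kind_power_law_solution
    (a δ α β : ℝ) (hα : α ≠ 0)
    (I : Set ℝ) (hIopen : IsOpen I) (hIconn : I.OrdConnected)
    (hpos : ∀ t ∈ I, 0 < α * t + β)
    (A : ℝ → ℝ) (hA : ContDiffOn ℝ (⊤ : ℕ∞) A I) (hApos : ∀ t ∈ I, 0 < A t)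
    (hKSS : ∀ t ∈ I, a + (α * t + β) * deriv A t / A t = δ) :
    ∃ C : ℝ, 0 < C ∧ ∀ t ∈ I, A t = C * (α * t + β) ^ ((δ - a) / α) := by
  rcases I.eq_empty_or_nonempty with hE | ⟨t₀, ht₀⟩
  · subst hE
    exact ⟨1, one_pos, fun t ht => absurd ht (Set.notMem_empty t)⟩
  have key : ∀ t ∈ I,
      HasDerivAt (fun s => A s * (α * s + β) ^ (-((δ - a) / α))) 0 t := by
    intro t ht
    have hp := hpos t ht
    have hAt := hApos t ht
    have hd : HasDerivAt A (deriv A t) t :=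
      (((hA.contDiffAt (hIopen.mem_nhds ht)).differentiableAt (by simp))).hasDerivAt
    have hl : HasDerivAt (fun s : ℝ => α * s + β) α t := by
      simpa using ((hasDerivAt_id t).const_mul α).add_const β
    have hr := hl.rpow_const (p := -((δ - a) / α)) (Or.inl hp.ne')
    have hm := hd.mul hr
    refine hm.congr_deriv ?_
    have hk := hKSS t ht
    have hk2 : (α * t + β) * deriv A t = (δ - a) * A t := by
      field_simp at hk
      linarith
    rw [Real.rpow_sub_one hp.ne']
    have hk3 : deriv A t = (δ - a) * A t / (α * t + β) := by
      rw [eq_div_iff hp.ne']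
      linarith
    rw [hk3]
    field_simp
    ring
  have hconst : ∀ t ∈ I, A t * (α * t + β) ^ (-((δ - a) / α))
      = A t₀ * (α * t₀ + β) ^ (-((δ - a) / α)) := by
    intro t ht
    exact hIopen.is_const_of_deriv_eq_zero hIconn.isPreconnected
      (fun s hs => (key s hs).differentiableAt.differentiableWithinAt)
      (fun s hs => (key s hs).deriv) ht ht₀
  refine ⟨A t₀ * (α * t₀ + β) ^ (-((δ - a) / α)),
    mul_pos (hApos t₀ ht₀) (Real.rpow_pos_of_pos (hpos t₀ ht₀) _), fun t ht => ?_⟩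
  rw [← hconst t ht, mul_assoc, ← Real.rpow_add (hpos t ht)]
  simp
end
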